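/- arXiv:math-ph/0412093 — 4 statements merged into one kernel-verified Lean document; each statement's English description precedes it below -/
import Mathlib

section
/- Let M = M_n(ℂ) with faithful state ω of density D_ω, and let M₀ ⊆ M be a *-subalgebra invariant under the modular group of ω. Let D₀ ∈ M₀ be the density of ω|M₀ with respect to the restricted trace (i.e., Tr(D₀ a) = Tr(D_ω a) for a ∈ M₀) and D₁ ∈ M₁ := M₀' ∩ M the analogous density for ω|M₁. Then there exists a positive element z in the center of M₁ such that D_ω = D₀ D₁ z, and D₀, D₁, z mutually commute. -/
open ComplexOrder Matrix

/-- Imaginary power `D^{it}` of a Hermitian matrix, via spectral decomposition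
(vanishing on the kernel). -/
noncomputable def Matrix.IsHermitian.impow {n : ℕ} {D : Matrix (Fin n) (Fin n) ℂ}
    (hD : D.IsHermitian) (t : ℝ) : Matrix (Fin n) (Fin n) ℂ :=
  (hD.eigenvectorUnitary : Matrix (Fin n) (Fin n) ℂ) *
    Matrix.diagonal (fun i => if hD.eigenvalues i = 0 then 0 else
      Complex.exp (Complex.I * t * Real.log (hD.eigenvalues i))) *
    star (hD.eigenvectorUnitary : Matrix (Fin n) (Fin n) ℂ)

section Aux
open scoped MatrixOrder Matrix.Norms.L2Operator in
lemma aux_comm_psd {n : ℕ} {A B : Matrix (Fin n) (Fin n) ℂ} (hA : A.PosSemidef)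
    (hB : B.PosSemidef) (h : A * B = B * A) : (A * B).PosSemidef := by
  rw [← Matrix.nonneg_iff_posSemidef] at *
  exact Commute.mul_nonneg hA hB h

lemma aux_faithful {n : ℕ} {D b : Matrix (Fin n) (Fin n) ℂ} (hD : D.PosDef)
    (h : (D * (b * bᴴ)).trace = 0) : b = 0 := by
  have h1 : (bᴴ * D * b).PosSemidef := hD.posSemidef.conjTranspose_mul_mul_same b
  have h2 : bᴴ * D * b = 0 := by
    rw [← h1.trace_eq_zero_iff, ← h, ← Matrix.mul_assoc, Matrix.trace_mul_comm (D * b), Matrix.mul_assoc]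
  have h3 : ∀ x, b *ᵥ x = 0 := by
    intro x
    by_contra hx
    have h4 := hD.dotProduct_mulVec_pos hx
    rw [Matrix.star_mulVec, Matrix.mulVec_mulVec, ← Matrix.dotProduct_mulVec,
      Matrix.mulVec_mulVec, ← Matrix.mul_assoc, h2] at h4
    simp at h4
  ext i j
  have := congrFun (h3 (Pi.single j 1)) i
  simpa using this

lemma aux_inv {n : ℕ} {D : Matrix (Fin n) (Fin n) ℂ} (hD : D.PosDef)
    (N : StarSubalgebra ℂ (Matrix (Fin n) (Fin n) ℂ)) {E : Matrix (Fin n) (Fin n) ℂ}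
    (hE : E ∈ N) (htr : ∀ a ∈ N, (E * a).trace = (D * a).trace) :
    ∃ F ∈ N, E * F = 1 ∧ F * E = 1 := by
  let L : N →ₗ[ℂ] N := LinearMap.mulLeft ℂ (⟨E, hE⟩ : N)
  have hinj : Function.Injective L := by
    rw [← LinearMap.ker_eq_bot, LinearMap.ker_eq_bot']
    intro b hb
    have hb' : E * (b : Matrix (Fin n) (Fin n) ℂ) = 0 := congrArg Subtype.val hb
    apply Subtype.ext
    apply aux_faithful hD
    have hm : (b : Matrix (Fin n) (Fin n) ℂ) * (b : Matrix (Fin n) (Fin n) ℂ)ᴴ ∈ N :=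
      mul_mem b.2 (star_mem b.2)
    rw [← htr _ hm, ← Matrix.mul_assoc, hb']
    simp
  haveI : FiniteDimensional ℂ N :=
    inferInstanceAs (FiniteDimensional ℂ (Subalgebra.toSubmodule N.toSubalgebra))
  obtain ⟨F, hF⟩ := (LinearMap.injective_iff_surjective (f := L)).1 hinj 1
  have hF' : E * (F : Matrix (Fin n) (Fin n) ℂ) = 1 := congrArg Subtype.val hF
  exact ⟨F, F.2, hF', mul_eq_one_comm.1 hF'⟩

lemma aux_eq {n : ℕ} (N : StarSubalgebra ℂ (Matrix (Fin n) (Fin n) ℂ))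
    {x y : Matrix (Fin n) (Fin n) ℂ} (hx : x ∈ N) (hy : y ∈ N)
    (h : ∀ b ∈ N, (x * b).trace = (y * b).trace) : x = y := by
  have h1 : (x - y) ∈ N := sub_mem hx hy
  have h2 := h _ (star_mem h1)
  rw [← sub_eq_zero, ← Matrix.trace_sub, ← sub_mul, Matrix.star_eq_conjTranspose,
    Matrix.trace_mul_conjTranspose_self_eq_zero_iff] at h2
  exact sub_eq_zero.1 h2

noncomputable def auxG {n : ℕ} {D : Matrix (Fin n) (Fin n) ℂ} (hD : D.IsHermitian) (z : ℂ) :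
    Matrix (Fin n) (Fin n) ℂ :=
  (hD.eigenvectorUnitary : Matrix (Fin n) (Fin n) ℂ) *
    Matrix.diagonal (fun i => Complex.exp (z * Real.log (hD.eigenvalues i))) *
    star (hD.eigenvectorUnitary : Matrix (Fin n) (Fin n) ℂ)

lemma auxG_one {n : ℕ} {D : Matrix (Fin n) (Fin n) ℂ} (hD : D.PosDef) : auxG hD.1 1 = D := by
  conv_rhs => rw [hD.1.spectral_theorem]
  rw [Unitary.conjStarAlgAut_apply]
  unfold auxG
  congr 3
  ext i
  simp only [one_mul, ← Complex.ofReal_exp, Real.exp_log (hD.eigenvalues_pos i)]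
  rfl

lemma auxG_mul {n : ℕ} {D : Matrix (Fin n) (Fin n) ℂ} (hD : D.IsHermitian) (z : ℂ) :
    auxG hD z * auxG hD (-z) = 1 := by
  unfold auxG
  have hU : star (hD.eigenvectorUnitary : Matrix (Fin n) (Fin n) ℂ) *
    (hD.eigenvectorUnitary : Matrix (Fin n) (Fin n) ℂ) = 1 := Unitary.coe_star_mul_self _
  have hU' : (hD.eigenvectorUnitary : Matrix (Fin n) (Fin n) ℂ) *
    star (hD.eigenvectorUnitary : Matrix (Fin n) (Fin n) ℂ) = 1 := Unitary.coe_mul_star_self _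
  generalize (hD.eigenvectorUnitary : Matrix (Fin n) (Fin n) ℂ) = U at *
  rw [show ∀ A B : Matrix (Fin n) (Fin n) ℂ, U * A * star U * (U * B * star U) =
    U * (A * (star U * U) * B) * star U by intros; simp only [Matrix.mul_assoc], hU,
    Matrix.mul_one, Matrix.diagonal_mul_diagonal]
  simp [← Complex.exp_add, hU']

lemma auxG_impow {n : ℕ} {D : Matrix (Fin n) (Fin n) ℂ} (hD : D.PosDef) (t : ℝ) :
    hD.1.impow t = auxG hD.1 (Complex.I * t) := by
  unfold auxG Matrix.IsHermitian.impow
  congr 3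
  ext i
  rw [if_neg (hD.eigenvalues_pos i).ne']

lemma auxG_sum {n : ℕ} {D : Matrix (Fin n) (Fin n) ℂ} (hD : D.IsHermitian) (z : ℂ) :
    auxG hD z = ∑ i, Complex.exp (z * Real.log (hD.eigenvalues i)) •
      ((hD.eigenvectorUnitary : Matrix (Fin n) (Fin n) ℂ) * Matrix.single i i 1 *
        star (hD.eigenvectorUnitary : Matrix (Fin n) (Fin n) ℂ)) := by
  unfold auxG
  rw [← Matrix.sum_single_eq_diagonal]
  rw [Matrix.mul_sum, Matrix.sum_mul]
  refine Finset.sum_congr rfl fun i _ => ?_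
  rw [← Matrix.smul_mul, ← Matrix.mul_smul, Matrix.smul_single, smul_eq_mul, mul_one]

lemma aux_modular {n : ℕ} {D : Matrix (Fin n) (Fin n) ℂ} (hD : D.PosDef)
    (N : StarSubalgebra ℂ (Matrix (Fin n) (Fin n) ℂ))
    (hinv : ∀ (t : ℝ), ∀ a ∈ N, hD.1.impow t * a * hD.1.impow (-t) ∈ N)
    {a : Matrix (Fin n) (Fin n) ℂ} (ha : a ∈ N) : D * a * auxG hD.1 (-1) ∈ N := by
  by_contra hcon
  obtain ⟨φ, hφ, hφN⟩ := Submodule.exists_dual_map_eq_bot_of_notMem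
    (p := Subalgebra.toSubmodule N.toSubalgebra) (x := D * a * auxG hD.1 (-1)) hcon inferInstance
  have hφ0 : ∀ x ∈ N, φ x = 0 := by
    intro x hx
    have : φ x ∈ (Subalgebra.toSubmodule N.toSubalgebra).map φ := ⟨x, hx, rfl⟩
    rw [hφN] at this
    simpa using this
  let f : ℂ → ℂ := fun z => φ (auxG hD.1 z * a * auxG hD.1 (-z))
  have hf : Differentiable ℂ f := by
    have : f = fun z => φ (auxG hD.1 z * a * auxG hD.1 (-z)) := rfl
    rw [this]
    simp only [auxG_sum, Matrix.sum_mul, Matrix.mul_sum, map_sum, Matrix.smul_mul, Matrix.mul_smul,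
      map_smul, smul_eq_mul]
    fun_prop
  have hf0 : ∀ t : ℝ, f (Complex.I * t) = 0 := by
    intro t
    have := hφ0 _ (hinv t a ha)
    rw [auxG_impow hD, auxG_impow hD] at this
    simpa [f] using this
  let g : ℂ → ℂ := fun z => f (Complex.I * z)
  have hg : Differentiable ℂ g := hf.comp (by fun_prop)
  have hgz : Set.EqOn g 0 Set.univ := by
    apply AnalyticOnNhd.eqOn_zero_of_preconnected_of_frequently_eq_zero
      (z₀ := 0) (fun z _ => hg.analyticAt z) isPreconnected_univ trivial
    have ht : Filter.Tendsto (fun t : ℝ => (t : ℂ)) (nhdsWithin 0 {0}ᶜ) (nhdsWithin 0 {0}ᶜ) := by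
      apply Filter.Tendsto.inf
      · simpa using (Complex.continuous_ofReal.tendsto 0)
      · simp
    exact ht.frequently (Filter.Frequently.of_forall fun t => hf0 t)
  have h1 := hgz (Set.mem_univ (-Complex.I))
  apply hφ
  simpa [g, f, auxG_one hD] using h1
end Aux

/-- **Factorization of the density of `ω` along a modular-invariant
subalgebra.**  If `M₀ ⊆ M_n(ℂ)` is invariant under the modular group of the
faithful state `ω`, and `D₀ ∈ M₀`, `D₁ ∈ M₁ = M₀' ∩ M` are the densities of
the restrictions of `ω`, then `D_ω = D₀ D₁ z` for some positive `z` in the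
center of `M₁`, and `D₀, D₁, z` mutually commute. -/
theorem density_factorization {n : ℕ}
    (Dω : Matrix (Fin n) (Fin n) ℂ) (hω : Dω.PosDef) (htr : Dω.trace = 1)
    (M₀ : StarSubalgebra ℂ (Matrix (Fin n) (Fin n) ℂ))
    (hinv : ∀ (t : ℝ), ∀ a ∈ M₀, hω.1.impow t * a * hω.1.impow (-t) ∈ M₀)
    (D₀ : Matrix (Fin n) (Fin n) ℂ) (hD₀mem : D₀ ∈ M₀) (hD₀ : D₀.PosSemidef)
    (hD₀tr : ∀ a ∈ M₀, (D₀ * a).trace = (Dω * a).trace)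
    (D₁ : Matrix (Fin n) (Fin n) ℂ)
    (hD₁mem : ∀ b ∈ M₀, D₁ * b = b * D₁) (hD₁ : D₁.PosSemidef)
    (hD₁tr : ∀ a : Matrix (Fin n) (Fin n) ℂ, (∀ b ∈ M₀, a * b = b * a) →
      (D₁ * a).trace = (Dω * a).trace) :
    ∃ z : Matrix (Fin n) (Fin n) ℂ, z.PosSemidef ∧
      (∀ b ∈ M₀, z * b = b * z) ∧
      (∀ a : Matrix (Fin n) (Fin n) ℂ, (∀ b ∈ M₀, a * b = b * a) → z * a = a * z) ∧
      Dω = D₀ * D₁ * z ∧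
      D₀ * D₁ = D₁ * D₀ ∧ D₀ * z = z * D₀ ∧ D₁ * z = z * D₁ := by
  set H := auxG hω.1 (-1) with hH
  have hDH : Dω * H = 1 := by
    have := auxG_mul hω.1 1
    rwa [auxG_one hω] at this
  have hHD : H * Dω = 1 := mul_eq_one_comm.1 hDH
  let M₁ := StarSubalgebra.centralizer ℂ (M₀ : Set (Matrix (Fin n) (Fin n) ℂ))
  have hM₁ : ∀ a, a ∈ M₁ ↔ ∀ b ∈ M₀, a * b = b * a := by
    intro a
    rw [StarSubalgebra.mem_centralizer_iff]
    constructor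
    · intro h b hb
      exact (h b hb).1.symm
    · intro h b hb
      exact ⟨(h b hb).symm, (h _ (star_mem hb)).symm⟩
  have hD₁M : D₁ ∈ M₁ := (hM₁ _).2 hD₁mem
  obtain ⟨F₀, hF₀, hDF₀, hFD₀⟩ := aux_inv hω M₀ hD₀mem hD₀tr
  obtain ⟨F₁, hF₁, hDF₁, hFD₁⟩ := aux_inv hω M₁ hD₁M (fun a ha => hD₁tr a ((hM₁ a).1 ha))
  have key : ∀ a ∈ M₀, D₀ * a = Dω * a * H * D₀ := by
    intro a ha
    have hm := aux_modular hω M₀ hinv ha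
    apply aux_eq M₀ (mul_mem hD₀mem ha) (mul_mem hm hD₀mem)
    intro b hb
    rw [Matrix.mul_assoc, hD₀tr _ (mul_mem ha hb), ← hH, Matrix.mul_assoc _ D₀ b,
      Matrix.trace_mul_comm (Dω * a * H), Matrix.mul_assoc D₀,
      hD₀tr _ (mul_mem hb hm), ← hH,
      show Dω * (b * (Dω * a * H)) = (Dω * b * (Dω * a)) * H by simp only [Matrix.mul_assoc],
      Matrix.trace_mul_comm _ H,
      show H * (Dω * b * (Dω * a)) = (H * Dω) * (b * (Dω * a)) by simp only [Matrix.mul_assoc],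
      hHD, Matrix.one_mul, Matrix.trace_mul_comm b, Matrix.mul_assoc]
  -- y = D₀⁻¹ D
  obtain ⟨y, hy⟩ : ∃ y, y = F₀ * Dω := ⟨_, rfl⟩
  have hDy : Dω = D₀ * y := by rw [hy, ← Matrix.mul_assoc, hDF₀, Matrix.one_mul]
  have hyM : ∀ b ∈ M₀, y * b = b * y := by
    intro a ha
    have h1 := key _ (mul_mem ha hF₀)
    have h2 : D₀ * a * F₀ * Dω = Dω * a := by
      calc D₀ * a * F₀ * Dω = D₀ * (a * F₀) * Dω := by simp only [Matrix.mul_assoc]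
        _ = Dω * (a * F₀) * H * D₀ * Dω := by rw [h1]
        _ = Dω * a := by
          have h3 := key _ hF₀
          have h4 := key _ ha
          have h5 : D₀ * a * F₀ = Dω * a * H := by
            rw [h4, Matrix.mul_assoc _ D₀, hDF₀, Matrix.mul_one]
          rw [← h1, ← Matrix.mul_assoc, h5, Matrix.mul_assoc _ H, hHD, Matrix.mul_one]
    calc y * a = F₀ * (Dω * a) := by rw [hy, Matrix.mul_assoc]
      _ = F₀ * D₀ * (a * F₀ * Dω) := by rw [← h2]; simp only [Matrix.mul_assoc]
      _ = a * y := by rw [hFD₀, Matrix.one_mul, hy, Matrix.mul_assoc]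
  have hy1 : y * (H * D₀) = 1 := by
    rw [hy, Matrix.mul_assoc, ← Matrix.mul_assoc Dω, hDH, Matrix.one_mul, hFD₀]
  have hy2 : (H * D₀) * y = 1 := mul_eq_one_comm.1 hy1
  obtain ⟨v, hv⟩ : ∃ v, v = H * D₀ := ⟨_, rfl⟩
  rw [← hv] at hy1 hy2
  have hinvc : ∀ (x u a : Matrix (Fin n) (Fin n) ℂ), x * u = 1 → u * x = 1 → x * a = a * x →
      u * a = a * u := by
    intro x u a h1 h2 h
    calc u * a = u * (a * x) * u := by
          rw [Matrix.mul_assoc, Matrix.mul_assoc, h1, Matrix.mul_one]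
      _ = a * u := by rw [← h, ← Matrix.mul_assoc, h2, Matrix.one_mul]
  have hyM₁ : y ∈ M₁ := (hM₁ _).2 hyM
  have hvM₁ : v ∈ M₁ := (hM₁ _).2 fun b hb => hinvc y v b hy1 hy2 (hyM b hb)
  have hc0 : ∀ a ∈ M₁, D₀ * a = a * D₀ := fun a ha => ((hM₁ a).1 ha D₀ hD₀mem).symm
  -- w = D₁ y⁻¹
  have hwM₁ : D₁ * v ∈ M₁ := mul_mem hD₁M hvM₁
  have hwtr : ∀ a ∈ M₁, (D₁ * v * a).trace = (D₀ * a).trace := by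
    intro a ha
    rw [Matrix.mul_assoc, hD₁tr _ ((hM₁ _).1 (mul_mem hvM₁ ha)), hDy, Matrix.mul_assoc,
      ← Matrix.mul_assoc y, hy1, Matrix.one_mul]
  have hwc : ∀ a ∈ M₁, (D₁ * v) * a = a * (D₁ * v) := by
    intro a ha
    apply aux_eq M₁ (mul_mem hwM₁ ha) (mul_mem ha hwM₁)
    intro b hb
    rw [Matrix.mul_assoc, hwtr _ (mul_mem ha hb), Matrix.mul_assoc a, Matrix.trace_mul_comm a,
      Matrix.mul_assoc (D₁ * v), hwtr _ (mul_mem hb ha), ← Matrix.mul_assoc, hc0 a ha,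
      Matrix.mul_assoc, Matrix.trace_mul_comm a, Matrix.mul_assoc]
  have hwz1 : (D₁ * v) * (y * F₁) = 1 := by
    rw [Matrix.mul_assoc, ← Matrix.mul_assoc v, hy2, Matrix.one_mul, hDF₁]
  have hwz2 : (y * F₁) * (D₁ * v) = 1 := mul_eq_one_comm.1 hwz1
  have hzM₁ : y * F₁ ∈ M₁ := mul_mem hyM₁ hF₁
  have hzc : ∀ a ∈ M₁, (y * F₁) * a = a * (y * F₁) := fun a ha =>
    hinvc _ _ a hwz1 hwz2 (hwc a ha)
  have hD₁y : D₁ * y = y * D₁ := by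
    have h := hwc y hyM₁
    have h1 : D₁ = y * (D₁ * v) := by rw [← h, Matrix.mul_assoc, hy2, Matrix.mul_one]
    have h2 : D₁ = (D₁ * v) * y := by rw [Matrix.mul_assoc, hy2, Matrix.mul_one]
    calc D₁ * y = y * (D₁ * v) * y := by rw [← h1]
      _ = y * D₁ := by rw [Matrix.mul_assoc, ← h2]
  have hF₁y : F₁ * y = y * F₁ := hinvc D₁ F₁ y hDF₁ hFD₁ hD₁y
  have hDD₀ : F₀ * Dω = Dω * F₀ := by
    apply hinvc D₀ F₀ _ hDF₀ hFD₀
    have := hc0 y hyM₁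
    rw [hDy, Matrix.mul_assoc, ← this]
  have hF₀p : F₀.PosSemidef := by
    have : F₀ = D₀⁻¹ := (Matrix.inv_eq_right_inv hDF₀).symm
    rw [this]; exact hD₀.inv
  have hF₁p : F₁.PosSemidef := by
    have : F₁ = D₁⁻¹ := (Matrix.inv_eq_right_inv hDF₁).symm
    rw [this]; exact hD₁.inv
  have hyp : y.PosSemidef := by
    rw [hy]; exact aux_comm_psd hF₀p hω.posSemidef hDD₀
  refine ⟨y * F₁, aux_comm_psd hyp hF₁p hF₁y.symm, (hM₁ _).1 hzM₁,
    fun a ha => hzc a ((hM₁ a).2 ha), ?_, hc0 _ hD₁M, hc0 _ hzM₁, (hzc _ hD₁M).symm⟩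
  rw [← hF₁y, Matrix.mul_assoc, ← Matrix.mul_assoc D₁, hDF₁, Matrix.one_mul, hDy]
end

section
/- Let M = M_n(ℂ), ω a faithful state with density D_ω, and M₀ a *-subalgebra invariant under the modular group of ω, with factorization D_ω = D₀ D₁ z as above. For a state φ with density D_φ dominated by ω, the following are equivalent: (a) D_φ^{it} D_ω^{-it} ∈ M₀ for all real t; (b) D_φ = D_{φ,0} D₁ z, where D_{φ,0} ∈ M₀ is the density of φ|M₀ with respect to the restricted trace. -/
open ComplexOrder Matrix

noncomputable def Matrix.IsHermitian.fcx {n : ℕ} {D : Matrix (Fin n) (Fin n) ℂ}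
    (hD : D.IsHermitian) (f : ℂ → ℂ) : Matrix (Fin n) (Fin n) ℂ :=
  (hD.eigenvectorUnitary : Matrix (Fin n) (Fin n) ℂ) *
    Matrix.diagonal (fun i => f (hD.eigenvalues i : ℂ)) *
    star (hD.eigenvectorUnitary : Matrix (Fin n) (Fin n) ℂ)

noncomputable def gpow (t : ℝ) (x : ℂ) : ℂ :=
  if x = 0 then 0 else Complex.exp (Complex.I * t * Real.log ‖x‖)

section aux
variable {n : ℕ} {D : Matrix (Fin n) (Fin n) ℂ}

theorem impow_eq_fcx (hD : D.IsHermitian) (t : ℝ) : hD.impow t = hD.fcx (gpow t) := by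
  simp [Matrix.IsHermitian.impow, Matrix.IsHermitian.fcx, gpow]

theorem gpow_mul (t : ℝ) (x y : ℂ) : gpow t (x * y) = gpow t x * gpow t y := by
  unfold gpow
  by_cases hx : x = 0
  · simp [hx]
  by_cases hy : y = 0
  · simp [hy]
  rw [if_neg (mul_ne_zero hx hy), if_neg hx, if_neg hy, ← Complex.exp_add, norm_mul,
    Real.log_mul (by simpa using hx) (by simpa using hy)]
  push_cast
  ring_nf

theorem UU (hD : D.IsHermitian) : (hD.eigenvectorUnitary : Matrix (Fin n) (Fin n) ℂ) *
    star (hD.eigenvectorUnitary : Matrix (Fin n) (Fin n) ℂ) = 1 :=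
  Unitary.mul_star_self_of_mem hD.eigenvectorUnitary.2

theorem UU' (hD : D.IsHermitian) : star (hD.eigenvectorUnitary : Matrix (Fin n) (Fin n) ℂ) *
    (hD.eigenvectorUnitary : Matrix (Fin n) (Fin n) ℂ) = 1 :=
  Unitary.star_mul_self_of_mem hD.eigenvectorUnitary.2

theorem fcx_mul (hD : D.IsHermitian) (f g : ℂ → ℂ) :
    hD.fcx f * hD.fcx g = hD.fcx (fun x => f x * g x) := by
  unfold Matrix.IsHermitian.fcx
  set U := (hD.eigenvectorUnitary : Matrix (Fin n) (Fin n) ℂ)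
  have h : star U * U = 1 := UU' hD
  calc _ = U * diagonal (fun i => f (hD.eigenvalues i : ℂ)) * (star U * U) *
        diagonal (fun i => g (hD.eigenvalues i : ℂ)) * star U := by
          simp only [mul_assoc]
    _ = _ := by rw [h, mul_one, mul_assoc U, diagonal_mul_diagonal]

theorem fcx_id (hD : D.IsHermitian) : hD.fcx (fun x => x) = D := by
  have := hD.spectral_theorem
  rw [Unitary.conjStarAlgAut_apply] at this
  exact this.symm

theorem fcx_mul_self (hD : D.IsHermitian) (f : ℂ → ℂ) :
    hD.fcx f * D = hD.fcx (fun x => f x * x) := by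
  rw [← fcx_mul, fcx_id]

theorem fcx_const (hD : D.IsHermitian) (c : ℂ) : hD.fcx (fun _ => c) = algebraMap ℂ _ c := by
  unfold Matrix.IsHermitian.fcx
  have : (diagonal fun _ : Fin n => c) = c • (1 : Matrix (Fin n) (Fin n) ℂ) := by
    rw [← diagonal_one, ← diagonal_smul]; congr 1; ext; simp
  rw [this, Matrix.mul_smul, Matrix.smul_mul, mul_one, UU, Algebra.algebraMap_eq_smul_one]

theorem fcx_add (hD : D.IsHermitian) (f g : ℂ → ℂ) :
    hD.fcx (fun x => f x + g x) = hD.fcx f + hD.fcx g := by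
  unfold Matrix.IsHermitian.fcx
  rw [← diagonal_add, mul_add, add_mul]

theorem fcx_congr (hD : D.IsHermitian) {f g : ℂ → ℂ}
    (h : ∀ i, f (hD.eigenvalues i : ℂ) = g (hD.eigenvalues i : ℂ)) : hD.fcx f = hD.fcx g := by
  unfold Matrix.IsHermitian.fcx
  simp only [h]

theorem fcx_poly_mem (hD : D.IsHermitian) (M : StarSubalgebra ℂ (Matrix (Fin n) (Fin n) ℂ))
    (hM : D ∈ M) (p : Polynomial ℂ) : hD.fcx (fun x => p.eval x) ∈ M := by
  induction p using Polynomial.induction_on with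
  | C a => simp only [Polynomial.eval_C, fcx_const]; exact M.algebraMap_mem a
  | add p q hp hq => simp only [Polynomial.eval_add, fcx_add]; exact add_mem hp hq
  | monomial k a h =>
    have : hD.fcx (fun x => Polynomial.eval x (Polynomial.C a * Polynomial.X ^ (k + 1))) =
        hD.fcx (fun x => Polynomial.eval x (Polynomial.C a * Polynomial.X ^ k)) * D := by
      rw [fcx_mul_self]
      apply fcx_congr
      intro i
      simp [pow_succ, mul_assoc]
    rw [this]
    exact mul_mem h hM

theorem fcx_mem (hD : D.IsHermitian) (M : StarSubalgebra ℂ (Matrix (Fin n) (Fin n) ℂ))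
    (hM : D ∈ M) (f : ℂ → ℂ) : hD.fcx f ∈ M := by
  classical
  let s : Finset ℂ := Finset.univ.image (fun i => (hD.eigenvalues i : ℂ))
  have := fcx_poly_mem hD M hM (Lagrange.interpolate s id f)
  rwa [fcx_congr hD (g := f)] at this
  intro i
  exact Lagrange.eval_interpolate_at_node (s := s) (v := id) f Function.injective_id.injOn
    (Finset.mem_image_of_mem _ (Finset.mem_univ i))

theorem fcx_eigen (hD : D.IsHermitian) (f : ℂ → ℂ) (a : ℂ) (v : Fin n → ℂ)
    (hv : D *ᵥ v = a • v) : hD.fcx f *ᵥ v = f a • v := by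
  set U := (hD.eigenvectorUnitary : Matrix (Fin n) (Fin n) ℂ) with hU
  have h1 : star U * U = 1 := UU' hD
  have h2 : U * star U = 1 := UU hD
  set w := star U *ᵥ v with hw
  have hvw : v = U *ᵥ w := by rw [hw, mulVec_mulVec, h2, one_mulVec]
  have key : diagonal (fun i => (hD.eigenvalues i : ℂ)) *ᵥ w = a • w := by
    have e : star U * D = diagonal (fun i => (hD.eigenvalues i : ℂ)) * star U := by
      conv_lhs => rw [← fcx_id hD]
      unfold Matrix.IsHermitian.fcx
      rw [← hU, ← mul_assoc, ← mul_assoc, h1, one_mul]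
    rw [hw, mulVec_mulVec, ← e, ← mulVec_mulVec, hv, mulVec_smul]
  have key2 : diagonal (fun i => f (hD.eigenvalues i : ℂ)) *ᵥ w = f a • w := by
    ext i
    have := congrFun key i
    simp only [mulVec_diagonal, Pi.smul_apply, smul_eq_mul] at this ⊢
    by_cases h0 : w i = 0
    · simp [h0]
    · rw [mul_right_cancel₀ h0 this]
  unfold Matrix.IsHermitian.fcx
  rw [← hU, mul_assoc, ← mulVec_mulVec, ← mulVec_mulVec, ← hw, key2, mulVec_smul, ← hvw]

theorem joint_ext {A B X Y : Matrix (Fin n) (Fin n) ℂ} (hA : A.IsHermitian) (hB : B.IsHermitian)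
    (hAB : A * B = B * A)
    (h : ∀ (a b : ℂ) (v : Fin n → ℂ), A *ᵥ v = a • v → B *ᵥ v = b • v → X *ᵥ v = Y *ᵥ v) :
    X = Y := by
  have top := LinearMap.IsSymmetric.iSup_iSup_eigenspace_inf_eigenspace_eq_top_of_commute
    (isSymmetric_toEuclideanLin_iff.mpr hA) (isSymmetric_toEuclideanLin_iff.mpr hB) (by
      change _ * _ = _ * _
      ext v i
      simp [mulVec_mulVec, hAB])
  have le : (⊤ : Submodule ℂ (EuclideanSpace ℂ (Fin n))) ≤
      LinearMap.eqLocus X.toEuclideanLin Y.toEuclideanLin := by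
    rw [← top]
    refine iSup_le fun a => iSup_le fun b => ?_
    rintro v ⟨h1, h2⟩
    rw [SetLike.mem_coe, Module.End.mem_eigenspace_iff] at h1 h2
    have h1' := congrArg WithLp.ofLp h1
    have h2' := congrArg WithLp.ofLp h2
    simp only [ofLp_toLpLin, toLin'_apply, WithLp.ofLp_smul] at h1' h2'
    have := h a b _ h1' h2'
    rw [LinearMap.mem_eqLocus]
    apply WithLp.ofLp_injective
    simpa [ofLp_toLpLin] using this
  apply Matrix.toEuclideanLin.injective
  ext1 v
  exact le (Submodule.mem_top (x := v))

theorem impow_mul {A B C : Matrix (Fin n) (Fin n) ℂ} (hA : A.IsHermitian) (hB : B.IsHermitian)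
    (hC : C.IsHermitian) (hAB : A * B = B * A) (hCe : C = A * B) (t : ℝ) :
    hC.impow t = hA.impow t * hB.impow t := by
  simp only [impow_eq_fcx]
  refine joint_ext hA hB hAB fun a b v h1 h2 => ?_
  rw [← mulVec_mulVec, fcx_eigen hB _ b v h2, mulVec_smul, fcx_eigen hA _ a v h1,
    fcx_eigen hC _ (a * b) v, gpow_mul, smul_smul, mul_comm]
  rw [hCe, ← mulVec_mulVec, h2, mulVec_smul, h1, smul_smul, mul_comm]

theorem eig_ne (hD : D.IsHermitian) (hu : IsUnit D) (i : Fin n) : (hD.eigenvalues i : ℂ) ≠ 0 := by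
  intro h
  have h2 := hD.det_eq_prod_eigenvalues
  rw [Finset.prod_eq_zero (Finset.mem_univ i) h] at h2
  rw [Matrix.isUnit_iff_isUnit_det, h2] at hu
  simp at hu

theorem impow_mul_neg (hD : D.IsHermitian) (hu : IsUnit D) (t : ℝ) :
    hD.impow t * hD.impow (-t) = 1 := by
  rw [impow_eq_fcx, impow_eq_fcx, fcx_mul, fcx_congr hD (g := fun _ => 1), fcx_const, map_one]
  intro i
  simp only [gpow, eig_ne hD hu i, if_false]
  rw [← Complex.exp_add]
  simp

/-- entire extension -/
noncomputable def hpow (w : ℂ) (x : ℂ) : ℂ :=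
  if x = 0 then 0 else Complex.exp (w * Real.log ‖x‖)

theorem continuation {A B : Matrix (Fin n) (Fin n) ℂ} (hA : A.IsHermitian) (hB : B.IsHermitian)
    (M : StarSubalgebra ℂ (Matrix (Fin n) (Fin n) ℂ))
    (h : ∀ t : ℝ, hA.impow t * hB.impow (-t) ∈ M) (w : ℂ) :
    hA.fcx (hpow w) * hB.fcx (hpow (-w)) ∈ M := by
  by_contra hcon
  obtain ⟨l, hl, hl0⟩ := Submodule.exists_dual_map_eq_bot_of_notMem
    (p := Subalgebra.toSubmodule M.toSubalgebra) (x := hA.fcx (hpow w) * hB.fcx (hpow (-w))) hcon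
    inferInstance
  have hl1 : ∀ x ∈ M, l x = 0 := by
    intro x hx
    have : l x ∈ Submodule.map l (Subalgebra.toSubmodule M.toSubalgebra) := ⟨x, hx, rfl⟩
    rwa [hl0, Submodule.mem_bot] at this
  let F : ℂ → ℂ := fun w => l (hA.fcx (hpow w) * hB.fcx (hpow (-w)))
  have hdp : ∀ x : ℂ, Differentiable ℂ (fun w => hpow w x) := by
    intro x
    unfold hpow
    split_ifs <;> fun_prop
  have hdn : ∀ x : ℂ, Differentiable ℂ (fun w => hpow (-w) x) := fun x =>
    (hdp x).comp (differentiable_neg)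
  have hF : Differentiable ℂ F := by
    have e : F = fun w => ∑ i, ∑ j, (hA.fcx (hpow w) * hB.fcx (hpow (-w))) i j *
        l (Matrix.single i j 1) := by
      funext w
      simp only [F]
      conv_lhs => rw [Matrix.matrix_eq_sum_single (hA.fcx (hpow w) * hB.fcx (hpow (-w)))]
      simp only [map_sum]
      refine Finset.sum_congr rfl fun i _ => Finset.sum_congr rfl fun j _ => ?_
      rw [← smul_eq_mul (b := l (Matrix.single i j 1)), ← map_smul, Matrix.smul_single,
        smul_eq_mul, mul_one]
    rw [e]
    simp only [Matrix.IsHermitian.fcx, Matrix.mul_apply, Matrix.diagonal_apply, mul_ite, mul_zero,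
      Finset.sum_ite_eq', Finset.mem_univ, if_true]
    fun_prop
  have hz : ∀ t : ℝ, F (Complex.I * t) = 0 := by
    intro t
    have := hl1 _ (h t)
    rw [impow_eq_fcx, impow_eq_fcx] at this
    convert this using 4
    · ext x; simp [hpow, gpow]
    · ext x; simp [hpow, gpow]
  have hFz : F = 0 := by
    refine AnalyticOnNhd.eq_of_frequently_eq (z₀ := 0)
      (hF.differentiableOn.analyticOnNhd isOpen_univ) analyticOnNhd_const ?_
    have ht : Filter.Tendsto (fun t : ℝ => Complex.I * t) (nhdsWithin 0 {0}ᶜ)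
        (nhdsWithin 0 {0}ᶜ) := by
      refine tendsto_nhdsWithin_iff.mpr ⟨?_, ?_⟩
      · have : Continuous (fun t : ℝ => Complex.I * t) := by fun_prop
        have := this.tendsto 0
        simp only [Complex.ofReal_zero, mul_zero] at this
        exact this.mono_left nhdsWithin_le_nhds
      · filter_upwards [self_mem_nhdsWithin] with t ht
        simpa using ht
    exact ht.frequently (Filter.Eventually.frequently (Filter.Eventually.of_forall
      fun t => by simpa using hz t))
  exact hl (congrFun hFz w)

theorem posSemidef_fcx_one (hD : D.PosSemidef) : hD.1.fcx (hpow 1) = D := by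
  conv_rhs => rw [← fcx_id hD.1]
  apply fcx_congr
  intro i
  have := hD.eigenvalues_nonneg i
  unfold hpow
  split_ifs with h
  · exact h.symm
  · have h' : 0 < hD.1.eigenvalues i := lt_of_le_of_ne this (fun e => h (by simp [← e]))
    rw [Complex.norm_real, Real.norm_of_nonneg this, one_mul, ← Complex.ofReal_exp,
      Real.exp_log h']

theorem posDef_fcx_neg (hD : D.PosDef) : hD.1.fcx (hpow (-1)) * D = 1 := by
  have e : hD.1.fcx (hpow (-1)) * D = hD.1.fcx (hpow (-1)) * hD.1.fcx (hpow 1) := by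
    rw [posSemidef_fcx_one hD.posSemidef]
  rw [e, fcx_mul, fcx_congr hD.1 (g := fun _ => 1), fcx_const, map_one]
  intro i
  simp only [hpow, eig_ne hD.1 hD.isUnit i, if_false]
  rw [← Complex.exp_add]
  simp

end aux

/-- **Quantum factorization criterion.**  Let `ω` be a faithful state on
`M_n(ℂ)` with `M₀` invariant under its modular group and factorization
`D_ω = D₀ D₁ z` as in the factorization theorem.  A state `φ` satisfies the
cocycle condition `D_φ^{it} D_ω^{-it} ∈ M₀` for all `t` (sufficiency of `M₀`)
iff `D_φ = D_{φ,0} D₁ z` with `D_{φ,0} ∈ M₀` the density of `φ|M₀`. -/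
theorem factorization_criterion {n : ℕ}
    (Dω : Matrix (Fin n) (Fin n) ℂ) (hω : Dω.PosDef) (htr : Dω.trace = 1)
    (M₀ : StarSubalgebra ℂ (Matrix (Fin n) (Fin n) ℂ))
    (hinv : ∀ (t : ℝ), ∀ a ∈ M₀, hω.1.impow t * a * hω.1.impow (-t) ∈ M₀)
    (D₀ : Matrix (Fin n) (Fin n) ℂ) (hD₀mem : D₀ ∈ M₀) (hD₀ : D₀.PosSemidef)
    (hD₀tr : ∀ a ∈ M₀, (D₀ * a).trace = (Dω * a).trace)
    (D₁ : Matrix (Fin n) (Fin n) ℂ)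
    (hD₁mem : ∀ b ∈ M₀, D₁ * b = b * D₁) (hD₁ : D₁.PosSemidef)
    (hD₁tr : ∀ a : Matrix (Fin n) (Fin n) ℂ, (∀ b ∈ M₀, a * b = b * a) →
      (D₁ * a).trace = (Dω * a).trace)
    (z : Matrix (Fin n) (Fin n) ℂ) (hz : z.PosSemidef)
    (hzM₀ : ∀ b ∈ M₀, z * b = b * z)
    (hzc : ∀ a : Matrix (Fin n) (Fin n) ℂ, (∀ b ∈ M₀, a * b = b * a) → z * a = a * z)
    (hfact : Dω = D₀ * D₁ * z)
    (Dφ : Matrix (Fin n) (Fin n) ℂ) (hφ : Dφ.PosSemidef) (hφtr : Dφ.trace = 1)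
    (Dφ₀ : Matrix (Fin n) (Fin n) ℂ) (hDφ₀mem : Dφ₀ ∈ M₀)
    (hDφ₀tr : ∀ a ∈ M₀, (Dφ₀ * a).trace = (Dφ * a).trace) :
    (∀ t : ℝ, hφ.1.impow t * hω.1.impow (-t) ∈ M₀) ↔ Dφ = Dφ₀ * D₁ * z := by
  have hu : IsUnit Dω := hω.isUnit
  have hzD₁ : z * D₁ = D₁ * z := hzc D₁ hD₁mem
  have hKH : (D₁ * z).IsHermitian := by
    rw [Matrix.IsHermitian, conjTranspose_mul, hD₁.1, hz.1, hzD₁]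
  have hKc : ∀ b ∈ M₀, D₁ * z * b = b * (D₁ * z) := by
    intro b hb
    rw [mul_assoc, hzM₀ b hb, ← mul_assoc, hD₁mem b hb, mul_assoc]
  rw [mul_assoc] at hfact
  rw [mul_assoc]
  set K := D₁ * z with hK
  have hu2 : IsUnit D₀ ∧ IsUnit K := by
    rw [Matrix.isUnit_iff_isUnit_det, hfact, det_mul, IsUnit.mul_iff] at hu
    rwa [Matrix.isUnit_iff_isUnit_det, Matrix.isUnit_iff_isUnit_det]
  obtain ⟨huD, huK⟩ := hu2
  constructor
  · intro h
    have h1 := continuation hφ.1 hω.1 M₀ h 1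
    rw [posSemidef_fcx_one hφ] at h1
    set a := Dφ * hω.1.fcx (hpow (-1)) with ha
    have haφ : Dφ = a * D₀ * K := by
      rw [mul_assoc, ← hfact, ha, mul_assoc, posDef_fcx_neg hω, mul_one]
    have hX : a * D₀ ∈ M₀ := mul_mem h1 hD₀mem
    set X := a * D₀ with hXdef
    -- the inverse of D₀
    set R := hD₀.1.fcx (fun x => x⁻¹) with hR
    have hRm : R ∈ M₀ := fcx_mem _ _ hD₀mem _
    have hR1 : D₀ * R = 1 := by
      nth_rewrite 1 [← fcx_id hD₀.1]
      rw [hR, fcx_mul, fcx_congr hD₀.1 (g := fun _ => 1), fcx_const, map_one]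
      intro i
      exact mul_inv_cancel₀ (eig_ne hD₀.1 huD i)
    have hE : ∀ b ∈ M₀, (b * K).trace = b.trace := by
      intro b hb
      have := hD₀tr (R * b) (mul_mem hRm hb)
      rw [← mul_assoc, hR1, one_mul, hfact, mul_assoc, hKc _ (mul_mem hRm hb), ← mul_assoc,
        ← mul_assoc D₀, hR1, one_mul] at this
      exact this.symm
    have hY : ∀ b ∈ M₀, ((Dφ₀ - X) * b).trace = 0 := by
      intro b hb
      rw [sub_mul, trace_sub, hDφ₀tr b hb, haφ, mul_assoc, hKc b hb, ← mul_assoc,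
        hE _ (mul_mem hX hb), sub_self]
    have := hY (star (Dφ₀ - X)) (star_mem (sub_mem hDφ₀mem hX))
    rw [star_eq_conjTranspose, trace_mul_conjTranspose_self_eq_zero_iff, sub_eq_zero] at this
    rw [this]
    exact haφ
  · intro h t
    have hH : Dφ₀.IsHermitian := by
      have h1 : Dφᴴ = Dφ := hφ.1
      rw [h, conjTranspose_mul, hKH.eq, ← star_eq_conjTranspose, hKc _ (star_mem hDφ₀mem)] at h1
      exact huK.mul_right_cancel h1
    have e1 := impow_mul hH hKH hφ.1 (hKc _ hDφ₀mem).symm h t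
    have e2 := impow_mul hKH hD₀.1 hω.1 (hKc _ hD₀mem) (by rw [hfact, hKc _ hD₀mem]) (-t)
    rw [e1, e2, mul_assoc, ← mul_assoc (hKH.impow t), impow_mul_neg hKH huK, one_mul]
    rw [impow_eq_fcx, impow_eq_fcx]
    exact mul_mem (fcx_mem _ _ hDφ₀mem _) (fcx_mem _ _ hD₀mem _)
end

section
/- Let H_A, H_B, H_C be finite-dimensional Hilbert spaces and suppose H_B = ⊕_n (H_{nB}^L ⊗ H_{nB}^R) and the density matrix of a state ω_{ABC} on H_A ⊗ H_B ⊗ H_C has the form ω_{ABC} = Σ_n q_n D_n^L ⊗ D_n^R with q_n ≥ 0, Σ q_n = 1, where D_n^L is a density matrix on H_A ⊗ H_{nB}^L and D_n^R a density matrix on H_{nB}^R ⊗ H_C. Then the strong subadditivity of von Neumann entropy holds with equality: S(ω_{ABC}) + S(ω_B) = S(ω_{AB}) + S(ω_{BC}). -/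
open ComplexOrder Matrix

/-- von Neumann entropy of a Hermitian matrix: `S(ρ) = -Tr ρ log ρ`, computed
through the eigenvalues. -/
noncomputable def vnEntropy {α : Type*} [Fintype α] [DecidableEq α]
    {ρ : Matrix α α ℂ} (h : ρ.IsHermitian) : ℝ :=
  ∑ i, Real.negMulLog (h.eigenvalues i)

/-- Partial trace over the outer factors `A` and `C`. -/
noncomputable def ptB {ιA B ιC : Type*} [Fintype ιA] [Fintype ιC]
    (ρ : Matrix (ιA × B × ιC) (ιA × B × ιC) ℂ) : Matrix B B ℂ :=
  Matrix.of fun b b' => ∑ a, ∑ c, ρ (a, b, c) (a, b', c)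

/-- Partial trace over `C`. -/
noncomputable def ptAB {ιA B ιC : Type*} [Fintype ιC]
    (ρ : Matrix (ιA × B × ιC) (ιA × B × ιC) ℂ) : Matrix (ιA × B) (ιA × B) ℂ :=
  Matrix.of fun p q => ∑ c, ρ (p.1, p.2, c) (q.1, q.2, c)

/-- Partial trace over `A`. -/
noncomputable def ptBC {ιA B ιC : Type*} [Fintype ιA]
    (ρ : Matrix (ιA × B × ιC) (ιA × B × ιC) ℂ) : Matrix (B × ιC) (B × ιC) ℂ :=
  Matrix.of fun p q => ∑ a, ρ (a, p.1, p.2) (a, q.1, q.2)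

/-- The state `ω_{ABC} = Σ_n q_n D_n^L ⊗ D_n^R` adapted to the decomposition
`H_B = ⊕_n (H_{nB}^L ⊗ H_{nB}^R)`. -/
noncomputable def ssaState {N : ℕ} (l r : Fin N → ℕ) (ιA ιC : Type*)
    (q : Fin N → ℝ)
    (DL : (n : Fin N) → Matrix (ιA × Fin (l n)) (ιA × Fin (l n)) ℂ)
    (DR : (n : Fin N) → Matrix (Fin (r n) × ιC) (Fin (r n) × ιC) ℂ) :
    Matrix (ιA × ((n : Fin N) × (Fin (l n) × Fin (r n))) × ιC)
           (ιA × ((n : Fin N) × (Fin (l n) × Fin (r n))) × ιC) ℂ :=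
  Matrix.of fun x y =>
    if h : x.2.1.1 = y.2.1.1 then
      (q x.2.1.1 : ℂ) *
        DL x.2.1.1 (x.1, x.2.1.2.1) (y.1, Fin.cast (by rw [h]) y.2.1.2.1) *
        DR x.2.1.1 (x.2.1.2.2, x.2.2) (Fin.cast (by rw [h]) y.2.1.2.2, y.2.2)
    else 0

open scoped Kronecker in
theorem vnEntropy_of_charpoly {α β : Type*} [Fintype α] [DecidableEq α] [Fintype β]
    {ρ : Matrix α α ℂ} (h : ρ.IsHermitian) (d : β → ℝ)
    (hc : ρ.charpoly = ∏ i, (Polynomial.X - Polynomial.C (d i : ℂ))) :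
    vnEntropy h = ∑ i, Real.negMulLog (d i) := by
  have h1 := h.roots_charpoly_eq_eigenvalues
  rw [hc, Polynomial.roots_prod _ _ (by
      simp [Finset.prod_ne_zero_iff, Polynomial.X_sub_C_ne_zero])] at h1
  simp only [Polynomial.roots_X_sub_C, Multiset.bind_singleton] at h1
  have h2 := congrArg (fun s => (s.map (fun z : ℂ => Real.negMulLog z.re)).sum) h1
  simp only [Multiset.map_map] at h2
  exact h2.symm

open scoped Kronecker in
theorem vnEntropy_block {α o : Type*} [Fintype α] [DecidableEq α] [Fintype o] [DecidableEq o]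
    {β γ : o → Type*} [∀ n, Fintype (β n)] [∀ n, DecidableEq (β n)]
    [∀ n, Fintype (γ n)] [∀ n, DecidableEq (γ n)]
    {ρ : Matrix α α ℂ} (h : ρ.IsHermitian) (q : o → ℝ)
    (P : ∀ n, Matrix (β n) (β n) ℂ) (Q : ∀ n, Matrix (γ n) (γ n) ℂ)
    (hP : ∀ n, (P n).IsHermitian) (hQ : ∀ n, (Q n).IsHermitian)
    (hPt : ∀ n, (P n).trace = 1) (hQt : ∀ n, (Q n).trace = 1)
    (e : α ≃ (n : o) × (β n × γ n))
    (hρ : ∀ x y, ρ x y =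
      blockDiagonal' (fun n => (q n : ℂ) • (P n ⊗ₖ Q n)) (e x) (e y)) :
    vnEntropy h = ∑ n, (Real.negMulLog (q n) +
      q n * (vnEntropy (hP n) + vnEntropy (hQ n))) := by
  have key : ∀ {δ : Type _} [Fintype δ] [DecidableEq δ] {A : Matrix δ δ ℂ}
      (hA : A.IsHermitian), A = (hA.eigenvectorUnitary : Matrix δ δ ℂ) *
        diagonal (fun i => (hA.eigenvalues i : ℂ)) * (hA.eigenvectorUnitary : Matrix δ δ ℂ)ᴴ ∧
        (hA.eigenvectorUnitary : Matrix δ δ ℂ)ᴴ * (hA.eigenvectorUnitary : Matrix δ δ ℂ) = 1 := by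
    intro δ _ _ A hA
    refine ⟨?_, Unitary.coe_star_mul_self _⟩
    have := hA.spectral_theorem
    rw [Unitary.conjStarAlgAut_apply] at this
    exact this
  have key2 : ∀ {δ : Type _} [Fintype δ] [DecidableEq δ] {A : Matrix δ δ ℂ}
      (hA : A.IsHermitian), A = (hA.eigenvectorUnitary : Matrix δ δ ℂ) *
        diagonal (fun i => (hA.eigenvalues i : ℂ)) * (hA.eigenvectorUnitary : Matrix δ δ ℂ)ᴴ ∧
        (hA.eigenvectorUnitary : Matrix δ δ ℂ)ᴴ * (hA.eigenvectorUnitary : Matrix δ δ ℂ) = 1 := by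
    intro δ _ _ A hA
    refine ⟨?_, Unitary.coe_star_mul_self _⟩
    have := hA.spectral_theorem
    rw [Unitary.conjStarAlgAut_apply] at this
    exact this
  have hc : ρ.charpoly = ∏ x : (n : o) × (β n × γ n), (Polynomial.X - Polynomial.C
      ((q x.1 * ((hP x.1).eigenvalues x.2.1 * (hQ x.1).eigenvalues x.2.2) : ℝ) : ℂ)) := by
    have e1 : ρ = reindex e.symm e.symm
        (blockDiagonal' (fun n => (q n : ℂ) • (P n ⊗ₖ Q n))) := by
      ext x y
      simpa using hρ x y
    let U : ∀ n, Matrix (β n × γ n) (β n × γ n) ℂ := fun n =>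
      ((hP n).eigenvectorUnitary : Matrix (β n) (β n) ℂ) ⊗ₖ
        ((hQ n).eigenvectorUnitary : Matrix (γ n) (γ n) ℂ)
    let D : ∀ n, Matrix (β n × γ n) (β n × γ n) ℂ := fun n => diagonal fun x =>
      ((q n * ((hP n).eigenvalues x.1 * (hQ n).eigenvalues x.2) : ℝ) : ℂ)
    have hU : ∀ n, (U n)ᴴ * U n = 1 := by
      intro n
      simp only [U, conjTranspose_kronecker]
      rw [← mul_kronecker_mul, (key (hP n)).2, (key2 (hQ n)).2, one_kronecker_one]
    have e2 : (fun n => (q n : ℂ) • (P n ⊗ₖ Q n)) = fun n => U n * D n * (U n)ᴴ := by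
      funext n
      have hD : D n = (q n : ℂ) • (diagonal (fun i => ((hP n).eigenvalues i : ℂ)) ⊗ₖ
          diagonal (fun i => ((hQ n).eigenvalues i : ℂ))) := by
        rw [diagonal_kronecker_diagonal, ← diagonal_smul]
        simp only [D]
        congr 1
        funext x
        simp
      conv_lhs => rw [(key (hP n)).1, (key2 (hQ n)).1]
      rw [hD]
      simp only [U, conjTranspose_kronecker, mul_kronecker_mul, mul_smul, smul_mul,
        Matrix.mul_smul, Matrix.smul_mul]
    rw [e1, charpoly_reindex, e2, blockDiagonal'_mul, Matrix.charpoly_mul_comm,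
      ← blockDiagonal'_mul]
    have e3 : (fun n => (U n)ᴴ * (U n * D n)) = D := by
      funext n
      rw [← Matrix.mul_assoc, hU, Matrix.one_mul]
    rw [e3]
    simp only [D]
    rw [blockDiagonal'_diagonal, charpoly_diagonal]
  rw [vnEntropy_of_charpoly h _ hc, Fintype.sum_sigma]
  refine Finset.sum_congr rfl fun n _ => ?_
  have sP : ∑ i, (hP n).eigenvalues i = 1 := by
    have := (hP n).trace_eq_sum_eigenvalues
    rw [hPt] at this
    have := congrArg Complex.re this
    simpa using this.symm
  have sQ : ∑ i, (hQ n).eigenvalues i = 1 := by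
    have := (hQ n).trace_eq_sum_eigenvalues
    rw [hQt] at this
    have := congrArg Complex.re this
    simpa using this.symm
  rw [Fintype.sum_prod_type]
  have a5 : ∀ i j, Real.negMulLog (q n * ((hP n).eigenvalues i * (hQ n).eigenvalues j)) =
      ((hP n).eigenvalues i * (hQ n).eigenvalues j) * Real.negMulLog (q n) +
      (q n * (Real.negMulLog ((hP n).eigenvalues i) * (hQ n).eigenvalues j) +
      q n * ((hP n).eigenvalues i * Real.negMulLog ((hQ n).eigenvalues j))) := by
    intro i j
    rw [Real.negMulLog_mul, Real.negMulLog_mul]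
    ring
  simp only [a5, Finset.sum_add_distrib]
  simp only [← Finset.mul_sum, ← Finset.sum_mul]
  rw [sP, sQ]
  simp only [vnEntropy]
  ring

/-- trace out `A` from a matrix on `A ⊗ L`. -/
noncomputable def trFst {A L : Type*} [Fintype A] (M : Matrix (A × L) (A × L) ℂ) :
    Matrix L L ℂ := Matrix.of fun i j => ∑ a, M (a, i) (a, j)

/-- trace out `C` from a matrix on `R ⊗ C`. -/
noncomputable def trSnd {R C : Type*} [Fintype C] (M : Matrix (R × C) (R × C) ℂ) :
    Matrix R R ℂ := Matrix.of fun i j => ∑ c, M (i, c) (j, c)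

theorem trFst_herm {A L : Type*} [Fintype A] {M : Matrix (A × L) (A × L) ℂ}
    (h : M.IsHermitian) : (trFst M).IsHermitian := by
  ext i j
  simp only [trFst, conjTranspose_apply, of_apply, star_sum]
  exact Finset.sum_congr rfl fun a _ => h.apply _ _

theorem trSnd_herm {A L : Type*} [Fintype L] {M : Matrix (A × L) (A × L) ℂ}
    (h : M.IsHermitian) : (trSnd M).IsHermitian := by
  ext i j
  simp only [trSnd, conjTranspose_apply, of_apply, star_sum]
  exact Finset.sum_congr rfl fun a _ => h.apply _ _

theorem trFst_trace {A L : Type*} [Fintype A] [Fintype L] (M : Matrix (A × L) (A × L) ℂ) :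
    (trFst M).trace = M.trace := by
  simp only [trFst, trace, diag_apply, of_apply]
  rw [Fintype.sum_prod_type, Finset.sum_comm]

theorem trSnd_trace {A L : Type*} [Fintype A] [Fintype L] (M : Matrix (A × L) (A × L) ℂ) :
    (trSnd M).trace = M.trace := by
  simp only [trSnd, trace, diag_apply, of_apply]
  rw [Fintype.sum_prod_type]

/-- **Equality in strong subadditivity for states of the factorized form.**
If `ω_{ABC} = Σ_n q_n D_n^L ⊗ D_n^R` with respect to a decomposition
`H_B = ⊕_n (H_{nB}^L ⊗ H_{nB}^R)`, then
`S(ω_{ABC}) + S(ω_B) = S(ω_{AB}) + S(ω_{BC})`. -/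
theorem ssa_equality_of_factorized {N : ℕ} (l r : Fin N → ℕ)
    (ιA ιC : Type*) [Fintype ιA] [DecidableEq ιA] [Fintype ιC] [DecidableEq ιC]
    (q : Fin N → ℝ) (hq : ∀ n, 0 ≤ q n) (hqsum : ∑ n, q n = 1)
    (DL : (n : Fin N) → Matrix (ιA × Fin (l n)) (ιA × Fin (l n)) ℂ)
    (DR : (n : Fin N) → Matrix (Fin (r n) × ιC) (Fin (r n) × ιC) ℂ)
    (hDL : ∀ n, (DL n).PosSemidef) (hDLtr : ∀ n, (DL n).trace = 1)
    (hDR : ∀ n, (DR n).PosSemidef) (hDRtr : ∀ n, (DR n).trace = 1)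
    (hABC : (ssaState l r ιA ιC q DL DR).IsHermitian)
    (hB : (ptB (ssaState l r ιA ιC q DL DR)).IsHermitian)
    (hAB : (ptAB (ssaState l r ιA ιC q DL DR)).IsHermitian)
    (hBC : (ptBC (ssaState l r ιA ιC q DL DR)).IsHermitian) :
    vnEntropy hABC + vnEntropy hB = vnEntropy hAB + vnEntropy hBC := by
  have hL : ∀ n, (DL n).IsHermitian := fun n => (hDL n).isHermitian
  have hR : ∀ n, (DR n).IsHermitian := fun n => (hDR n).isHermitian
  have tL : ∀ n, (trFst (DL n)).trace = 1 := fun n => (trFst_trace _).trans (hDLtr n)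
  have tR : ∀ n, (trSnd (DR n)).trace = 1 := fun n => (trSnd_trace _).trans (hDRtr n)
  rw [vnEntropy_block hABC q DL DR hL hR hDLtr hDRtr
      { toFun := fun x => ⟨x.2.1.1, (x.1, x.2.1.2.1), (x.2.1.2.2, x.2.2)⟩
        invFun := fun y => (y.2.1.1, ⟨y.1, y.2.1.2, y.2.2.1⟩, y.2.2.2)
        left_inv := fun _ => rfl
        right_inv := fun _ => rfl } ?_,
    vnEntropy_block hB q (fun n => trFst (DL n)) (fun n => trSnd (DR n))
      (fun n => trFst_herm (hL n)) (fun n => trSnd_herm (hR n)) tL tR (Equiv.refl _) ?_,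
    vnEntropy_block hAB q DL (fun n => trSnd (DR n)) hL (fun n => trSnd_herm (hR n)) hDLtr tR
      { toFun := fun x => ⟨x.2.1, (x.1, x.2.2.1), x.2.2.2⟩
        invFun := fun y => (y.2.1.1, ⟨y.1, y.2.1.2, y.2.2⟩)
        left_inv := fun _ => rfl
        right_inv := fun _ => rfl } ?_,
    vnEntropy_block hBC q (fun n => trFst (DL n)) DR (fun n => trFst_herm (hL n)) hR tL hDRtr
      { toFun := fun x => ⟨x.1.1, x.1.2.1, (x.1.2.2, x.2)⟩
        invFun := fun y => (⟨y.1, y.2.1, y.2.2.1⟩, y.2.2.2)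
        left_inv := fun _ => rfl
        right_inv := fun _ => rfl } ?_]
  · rw [← Finset.sum_add_distrib, ← Finset.sum_add_distrib]
    exact Finset.sum_congr rfl fun n _ => by ring
  · rintro ⟨⟨n, i, j⟩, c⟩ ⟨⟨m, i', j'⟩, c'⟩
    by_cases h : n = m
    · subst h
      simp [ptBC, ssaState, trFst, blockDiagonal'_apply, Finset.mul_sum, Finset.sum_mul, mul_assoc]
    · simp [ptBC, ssaState, blockDiagonal'_apply, h]
  · rintro ⟨a, ⟨n, i, j⟩⟩ ⟨a', ⟨m, i', j'⟩⟩
    by_cases h : n = m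
    · subst h
      simp [ptAB, ssaState, trSnd, blockDiagonal'_apply, Finset.mul_sum, mul_assoc]
    · simp [ptAB, ssaState, blockDiagonal'_apply, h]
  · rintro ⟨n, i, j⟩ ⟨m, i', j'⟩
    by_cases h : n = m
    · subst h
      simp [ptB, ssaState, trFst, trSnd, blockDiagonal'_apply, Finset.mul_sum, Finset.sum_mul,
        mul_assoc]
      try exact Finset.sum_comm
    · simp [ptB, ssaState, blockDiagonal'_apply, h]
  · rintro ⟨a, ⟨n, i, j⟩, c⟩ ⟨a', ⟨m, i', j'⟩, c'⟩
    by_cases h : n = m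
    · subst h
      simp [ssaState, blockDiagonal'_apply, mul_assoc]
    · simp [ssaState, blockDiagonal'_apply, h]
end

section
/- Let D_θ (θ ∈ Θ) be density matrices on M_n(ℂ) admitting a decomposition D_θ = L_θ R where L_θ, R are positive matrices, R is invertible, and R commutes with every L_θ. If M_L denotes the *-subalgebra generated by {L_θ : θ ∈ Θ}, then D_θ^{it} D_ω^{-it} ∈ M_L for every θ and t, where D_ω = Σ_n λ_n D_{θ_n} is any faithful convex combination (λ_n > 0) of the D_θ; in particular M_L is invariant under the modular group of ω and is a sufficient subalgebra. -/
open ComplexOrder Matrix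

lemma impow_mem_adjoin {n : ℕ} {A : Matrix (Fin n) (Fin n) ℂ} (hA : A.IsHermitian) (t : ℝ) :
    hA.impow t ∈ Algebra.adjoin ℂ {A} := by
  classical
  set f : ℂ → ℂ := fun z => if z.re = 0 then 0 else Complex.exp (Complex.I * t * Real.log z.re)
    with hf
  set s : Finset ℂ := Finset.univ.image (fun i => (hA.eigenvalues i : ℂ)) with hs
  set p : Polynomial ℂ := Lagrange.interpolate s id f with hp
  have hpe : ∀ i, p.eval (hA.eigenvalues i : ℂ) = f (hA.eigenvalues i : ℂ) := by
    intro i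
    have := Lagrange.eval_interpolate_at_node (s := s) (v := id) f (Function.injective_id.injOn)
      (i := (hA.eigenvalues i : ℂ)) (by simp [hs])
    exact this
  have key : hA.impow t = Polynomial.aeval A p := by
    have h1 := hA.spectral_theorem
    have h2 : Polynomial.aeval A p = Unitary.conjStarAlgAut ℂ _ hA.eigenvectorUnitary
        (Polynomial.aeval (diagonal (RCLike.ofReal ∘ hA.eigenvalues)) p) := by
      conv_lhs => rw [h1]
      exact Polynomial.aeval_algHom_apply
        (Unitary.conjStarAlgAut ℂ _ hA.eigenvectorUnitary).toAlgEquiv.toAlgHom _ p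
    have h3 : Polynomial.aeval (diagonal (RCLike.ofReal ∘ hA.eigenvalues) :
        Matrix (Fin n) (Fin n) ℂ) p = diagonal (fun i => f (hA.eigenvalues i : ℂ)) := by
      have := Polynomial.aeval_algHom_apply (diagonalAlgHom (n := Fin n) (α := ℂ) ℂ)
        (fun i => (hA.eigenvalues i : ℂ)) p
      refine this.trans ?_
      change diagonal _ = _
      congr 1
      ext i
      rw [← hpe i]
      simp
    rw [h2, h3, Unitary.conjStarAlgAut_apply]
    simp [Matrix.IsHermitian.impow, hf]
  rw [key]
  exact Polynomial.aeval_mem_adjoin_singleton ℂ A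

lemma mulVec_eig {n : ℕ} {A : Matrix (Fin n) (Fin n) ℂ} (hA : A.IsHermitian)
    {v : Fin n → ℂ} {μ : ℂ} (h : A *ᵥ v = μ • v) (i : Fin n) :
    (hA.eigenvalues i : ℂ) * (star (hA.eigenvectorUnitary : Matrix (Fin n) (Fin n) ℂ) *ᵥ v) i
      = μ * (star (hA.eigenvectorUnitary : Matrix (Fin n) (Fin n) ℂ) *ᵥ v) i := by
  set U : Matrix (Fin n) (Fin n) ℂ := (hA.eigenvectorUnitary : Matrix (Fin n) (Fin n) ℂ) with hU
  have hUU : star U * U = 1 := Unitary.coe_star_mul_self hA.eigenvectorUnitary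
  have h1 := hA.spectral_theorem
  rw [Unitary.conjStarAlgAut_apply] at h1
  have h2 : star U * A = diagonal (fun i => (hA.eigenvalues i : ℂ)) * star U := by
    conv_lhs => rw [h1]
    rw [mul_assoc, ← mul_assoc, hUU, one_mul]
    rfl
  have h3 := congrArg (fun w => (star U *ᵥ w) i) h
  simp only [mulVec_mulVec, h2, mulVec_smul] at h3
  rw [← mulVec_mulVec, mulVec_diagonal] at h3
  simpa using h3

lemma impow_mulVec {n : ℕ} {A : Matrix (Fin n) (Fin n) ℂ} (hA : A.IsHermitian)
    {v : Fin n → ℂ} {μ : ℂ} (h : A *ᵥ v = μ • v) (t : ℝ) :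
    hA.impow t *ᵥ v =
      (if μ.re = 0 then 0 else Complex.exp (Complex.I * t * Real.log μ.re)) • v := by
  have he := mulVec_eig hA h
  unfold Matrix.IsHermitian.impow
  set U : Matrix (Fin n) (Fin n) ℂ := (hA.eigenvectorUnitary : Matrix (Fin n) (Fin n) ℂ) with hU
  have hUU : U * star U = 1 := Unitary.coe_mul_star_self hA.eigenvectorUnitary
  rw [← mulVec_mulVec, ← mulVec_mulVec]
  have : diagonal (fun i => if hA.eigenvalues i = 0 then 0 else
      Complex.exp (Complex.I * t * Real.log (hA.eigenvalues i))) *ᵥ (star U *ᵥ v) =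
      (if μ.re = 0 then 0 else Complex.exp (Complex.I * t * Real.log μ.re)) • (star U *ᵥ v) := by
    ext i
    rw [mulVec_diagonal, Pi.smul_apply, smul_eq_mul]
    by_cases hw : (star U *ᵥ v) i = 0
    · simp [hw]
    · have := mul_right_cancel₀ hw (he i)
      rw [← this]
      simp
  rw [this, mulVec_smul, mulVec_mulVec, hUU, one_mulVec]

lemma eig_real {n : ℕ} {A : Matrix (Fin n) (Fin n) ℂ} (hA : A.IsHermitian)
    {v : Fin n → ℂ} {μ : ℂ} (h : A *ᵥ v = μ • v) (hv : v ≠ 0) : μ = (μ.re : ℂ) := by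
  have he := mulVec_eig hA h
  set U : Matrix (Fin n) (Fin n) ℂ := (hA.eigenvectorUnitary : Matrix (Fin n) (Fin n) ℂ) with hU
  have hUU : U * star U = 1 := Unitary.coe_mul_star_self hA.eigenvectorUnitary
  have : star U *ᵥ v ≠ 0 := by
    intro h0
    apply hv
    have := congrArg (fun w => U *ᵥ w) h0
    simpa [mulVec_mulVec, hUU] using this
  obtain ⟨i, hi⟩ := Function.ne_iff.mp this
  rw [← mul_right_cancel₀ hi (he i)]
  simp

lemma impow_mul_s19 {n : ℕ} {D L R : Matrix (Fin n) (Fin n) ℂ} (hD : D.IsHermitian)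
    (hL : L.IsHermitian) (hR : R.PosDef) (hc : R * L = L * R) (h : D = L * R) (t : ℝ) :
    hD.impow t = hL.impow t * hR.1.impow t := by
  have hLs := Matrix.isSymmetric_toEuclideanLin_iff.mpr hL
  have hRs := Matrix.isSymmetric_toEuclideanLin_iff.mpr hR.1
  have hcs : Commute (toEuclideanLin L) (toEuclideanLin R) := by
    refine LinearMap.ext fun x => ?_
    simp [Module.End.mul_apply, toLpLin_apply, mulVec_mulVec, hc]
  have htop := hLs.iSup_iSup_eigenspace_inf_eigenspace_eq_top_of_commute hRs hcs
  suffices hs : toEuclideanLin (hD.impow t) = toEuclideanLin (hL.impow t * hR.1.impow t) from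
    toEuclideanLin.injective hs
  suffices hs : ⊤ ≤ LinearMap.eqLocus (toEuclideanLin (hD.impow t))
      (toEuclideanLin (hL.impow t * hR.1.impow t)) from
    LinearMap.ext fun x => hs (Submodule.mem_top)
  rw [← htop]
  refine iSup_le fun α => iSup_le fun β => ?_
  rintro x ⟨hx1, hx2⟩
  have hx1 : L *ᵥ x.ofLp = α • x.ofLp := by
    have := congrArg WithLp.ofLp (Module.End.mem_eigenspace_iff.mp hx1)
    simpa [toLpLin_apply] using this
  have hx2 : R *ᵥ x.ofLp = β • x.ofLp := by
    have := congrArg WithLp.ofLp (Module.End.mem_eigenspace_iff.mp hx2)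
    simpa [toLpLin_apply] using this
  rw [LinearMap.mem_eqLocus, toLpLin_apply, toLpLin_apply]
  congr 1
  set v := x.ofLp
  have hx3 : D *ᵥ v = (α * β) • v := by
    rw [h, ← mulVec_mulVec, hx2, mulVec_smul, hx1, smul_smul, mul_comm]
  by_cases hv : v = 0
  · simp [hv]
  have ha := eig_real hL hx1 hv
  have hb := eig_real hR.1 hx2 hv
  have hb0 : β ≠ 0 := by
    rintro rfl
    have := hR.dotProduct_mulVec_pos hv
    simp [hx2] at this
  rw [← mulVec_mulVec, impow_mulVec hR.1 hx2, mulVec_smul, impow_mulVec hL hx1,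
    impow_mulVec hD hx3, smul_smul]
  congr 1
  have hm : (α * β).re = α.re * β.re := by
    rw [ha, hb]; simp
  have hb1 : β.re ≠ 0 := fun h0 => hb0 (by rw [hb, h0]; simp)
  rw [hm]
  by_cases ha0 : α.re = 0
  · simp [ha0]
  · rw [if_neg (mul_ne_zero ha0 hb1), if_neg ha0, if_neg hb1, Real.log_mul ha0 hb1,
      ← Complex.exp_add]
    congr 1
    push_cast
    ring

lemma impow_mul_neg_s19 {n : ℕ} {R : Matrix (Fin n) (Fin n) ℂ} (hR : R.PosDef) (t : ℝ) :
    hR.1.impow t * hR.1.impow (-t) = 1 := by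
  unfold Matrix.IsHermitian.impow
  set U : Matrix (Fin n) (Fin n) ℂ := (hR.1.eigenvectorUnitary : Matrix (Fin n) (Fin n) ℂ) with hU
  have hUU : star U * U = 1 := Unitary.coe_star_mul_self hR.1.eigenvectorUnitary
  have hUU' : U * star U = 1 := Unitary.coe_mul_star_self hR.1.eigenvectorUnitary
  have hne : ∀ i, hR.1.eigenvalues i ≠ 0 := fun i => (hR.eigenvalues_pos i).ne'
  simp only [hne, if_false]
  rw [mul_assoc, mul_assoc U _ (star U), ← mul_assoc (star U), hUU, one_mul, mul_assoc U,
    ← mul_assoc (diagonal _), diagonal_mul_diagonal]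
  have : (fun i => Complex.exp (Complex.I * (t : ℂ) * (Real.log (hR.1.eigenvalues i) : ℂ)) *
      Complex.exp (Complex.I * ((-t : ℝ) : ℂ) * (Real.log (hR.1.eigenvalues i) : ℂ))) =
      fun _ => 1 := by
    ext i
    rw [← Complex.exp_add, ← Complex.exp_zero]
    congr 1
    push_cast
    ring
  rw [this, diagonal_one, one_mul, hUU']

/-- **Sufficiency of the algebra generated by a commuting factorization.**
If `D_θ = L_θ R` with `L_θ, R` positive, `R` invertible and commuting with
every `L_θ`, and `M_L` is the *-subalgebra generated by the `L_θ`, then for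
any faithful convex combination `D_ω = Σ λ_n D_{θ_n}` (which is assumed
positive definite) all the cocycles `D_θ^{it} D_ω^{-it}` lie in `M_L`
(sufficiency), and `M_L` is invariant under the modular group of `ω`. -/
theorem sufficiency_of_generated_subalgebra {n : ℕ} {Θ : Type*}
    (D : Θ → Matrix (Fin n) (Fin n) ℂ)
    (hD : ∀ θ, (D θ).PosSemidef) (htr : ∀ θ, (D θ).trace = 1)
    (L : Θ → Matrix (Fin n) (Fin n) ℂ) (R : Matrix (Fin n) (Fin n) ℂ)
    (hL : ∀ θ, (L θ).PosSemidef) (hR : R.PosDef)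
    (hcomm : ∀ θ, R * L θ = L θ * R)
    (hfact : ∀ θ, D θ = L θ * R)
    (θseq : ℕ → Θ) (lam : ℕ → ℝ) (hlam : ∀ k, 0 < lam k)
    (hlamsum : (∑' k, lam k) = 1)
    (Dω : Matrix (Fin n) (Fin n) ℂ) (hDω : Dω = ∑' k, lam k • D (θseq k))
    (hω : Dω.PosDef) :
    (∀ (θ : Θ) (t : ℝ), (hD θ).1.impow t * hω.1.impow (-t) ∈
        StarAlgebra.adjoin ℂ (Set.range L)) ∧
    (∀ (t : ℝ), ∀ x ∈ StarAlgebra.adjoin ℂ (Set.range L),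
        hω.1.impow t * x * hω.1.impow (-t) ∈ StarAlgebra.adjoin ℂ (Set.range L)) := by
  set M := StarAlgebra.adjoin ℂ (Set.range L) with hM
  have hLM : ∀ θ, L θ ∈ M := fun θ => StarAlgebra.subset_adjoin ℂ _ ⟨θ, rfl⟩
  have hRdet : IsUnit R.det := (Matrix.isUnit_iff_isUnit_det _).mp hR.isUnit
  -- elements of `M` commute with `R`
  have hcM : ∀ x ∈ M, Commute R x := by
    intro x hx
    induction hx using StarAlgebra.adjoin_induction with
    | mem x hx => obtain ⟨θ, rfl⟩ := hx; exact hcomm θ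
    | algebraMap r => exact (Algebra.commutes r R).symm
    | add x y _ _ h1 h2 => exact h1.add_right h2
    | mul x y _ _ h1 h2 => exact h1.mul_right h2
    | star x _ h =>
      have := h.star_star
      rwa [show star R = R from hR.1] at this
  have hcMt : ∀ t, ∀ x ∈ M, Commute (hR.1.impow t) x := fun t x hx =>
    (Algebra.commute_of_mem_adjoin_singleton_of_commute (impow_mem_adjoin hR.1 t)
      (hcM x hx).symm).symm
  -- the factor of `Dω`
  obtain ⟨Lω, hLωM, hfω⟩ : ∃ Lω ∈ M, Dω = Lω * R := by
    by_cases hsum : Summable fun k => lam k • D (θseq k)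
    · refine ⟨Dω * R⁻¹, ?_, by rw [mul_assoc, Matrix.nonsing_inv_mul _ hRdet, mul_one]⟩
      have h1 : HasSum (fun k => lam k • L (θseq k)) (Dω * R⁻¹) := by
        have h2 := hsum.hasSum.mul_right R⁻¹
        rw [← hDω] at h2
        refine h2.congr_fun ?_ |> id
        intro k
        rw [hfact, smul_mul_assoc, mul_assoc, Matrix.mul_nonsing_inv _ hRdet, mul_one]
      have hcl : IsClosed (M.toSubalgebra.toSubmodule : Set (Matrix (Fin n) (Fin n) ℂ)) :=
        Submodule.closed_of_finiteDimensional _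
      refine hcl.mem_of_tendsto h1 (Filter.Eventually.of_forall fun s => ?_)
      refine Submodule.sum_mem _ fun k _ => ?_
      have := M.toSubalgebra.toSubmodule.smul_mem (lam k : ℂ) (hLM (θseq k))
      rwa [Complex.coe_smul] at this
    · refine ⟨0, zero_mem _, ?_⟩
      rw [hDω, tsum_eq_zero_of_not_summable hsum, zero_mul]
  have hcω : R * Lω = Lω * R := hcM _ hLωM
  have hLω : Lω.IsHermitian := by
    have h1 : star Dω = Dω := hω.1
    have h2 : star R = R := hR.1
    have h3 : R * star Lω = R * Lω := by
      rw [hcω, ← hfω, ← h1, hfω, star_mul, h2]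
    have := congrArg (fun x => R⁻¹ * x) h3
    simp only [← mul_assoc, Matrix.nonsing_inv_mul _ hRdet, one_mul] at this
    exact this
  have hmem : ∀ {A : Matrix (Fin n) (Fin n) ℂ} (hA : A.IsHermitian) (t : ℝ), A ∈ M →
      hA.impow t ∈ M := by
    intro A hA t hAM
    have : Algebra.adjoin ℂ {A} ≤ M.toSubalgebra := Algebra.adjoin_le (by simpa using hAM)
    exact this (impow_mem_adjoin hA t)
  have hωt : ∀ t, hω.1.impow t = hLω.impow t * hR.1.impow t := fun t =>
    impow_mul_s19 hω.1 hLω hR hcω hfω t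
  have key : ∀ t, ∀ x ∈ M, hR.1.impow t * x * hω.1.impow (-t) ∈ M := by
    intro t x hx
    rw [hωt, (hcMt t x hx).eq, ← (hcMt (-t) _ (hmem hLω (-t) hLωM)).eq, mul_assoc,
      ← mul_assoc (hR.1.impow t), impow_mul_neg_s19 hR, one_mul]
    exact mul_mem hx (hmem hLω _ hLωM)
  refine ⟨fun θ t => ?_, fun t x hx => ?_⟩
  · rw [impow_mul_s19 (hD θ).1 (hL θ).1 hR (hcomm θ) (hfact θ), mul_assoc]
    have := key t 1 (one_mem _)
    rw [mul_one] at this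
    exact mul_mem (hmem (hL θ).1 t (hLM θ)) this
  · rw [hωt t, mul_assoc, mul_assoc, ← mul_assoc (hR.1.impow t)]
    exact mul_mem (hmem hLω t hLωM) (key t x hx)
end
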